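/- arXiv:2108.03617 — 2 statements merged into one kernel-verified Lean document; each statement's English description precedes it below -/
import Mathlib

section
/- Let A be a (not necessarily commutative) semiring and N : A → A a multiplicative negation map (an additive monoid homomorphism with N ∘ N = id and N(ab) = N(a)b = aN(b)). Define [a, b] := ab + N(ba). Then for all x, y, z ∈ A the ⪯-Jacobi identity holds in the form [[x, y], z] + [y, [x, z]] = [x, [y, z]] + q + N(q), where q = yxz + zxy; in particular [x, [y, z]] ⪯₀ [[x, y], z] + [y, [x, z]]. -/
/-- The Lie commutator `[a, b] := a b + N (b a)` in a semiring with a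
multiplicative negation map `N`. -/
def lieComm {A : Type*} [Semiring A] (N : A →+ A) (a b : A) : A := a * b + N (b * a)

/-- Let `A` be a semiring and `N` a multiplicative negation map
(`N ∘ N = id`, `N (a b) = N a * b = a * N b`).  With `[a,b] := a b + N (b a)`,
the `⪯`-Jacobi identity holds: for all `x, y, z`,
`[[x,y],z] + [y,[x,z]] = [x,[y,z]] + q + N q` with `q = y x z + z x y`;
in particular `[x,[y,z]] ⪯₀ [[x,y],z] + [y,[x,z]]`. -/
theorem jacobi_surpassing (A : Type*) [Semiring A]
    (N : A →+ A) (hN2 : ∀ a, N (N a) = a)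
    (hNl : ∀ a b : A, N (a * b) = N a * b) (hNr : ∀ a b : A, N (a * b) = a * N b) :
    ∀ x y z : A,
      lieComm N (lieComm N x y) z + lieComm N y (lieComm N x z) =
        lieComm N x (lieComm N y z) +
          ((y * x * z + z * x * y) + N (y * x * z + z * x * y)) ∧
      ∃ c : A,
        lieComm N (lieComm N x y) z + lieComm N y (lieComm N x z) =
          lieComm N x (lieComm N y z) + (c + N c) := by
  intro x y z
  have key : lieComm N (lieComm N x y) z + lieComm N y (lieComm N x z) =
        lieComm N x (lieComm N y z) +
          ((y * x * z + z * x * y) + N (y * x * z + z * x * y)) := by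
    simp only [lieComm, mul_add, add_mul, map_add, ← hNl, ← hNr, hN2, mul_assoc]
    abel
  exact ⟨key, _, key⟩
end

section
/- Let A be a commutative semiring, ⋀ the exterior semialgebra over A, V ⊂ ⋀ the A-span of {x^i : i ∈ ℕ}, and f : V → V an A-linear map. Let D_f(z) and D̄_f(z) be the multiplicative families of A-linear operators on ⋀ commuting with (−), determined by D_f(z)x^j = Σ_{n≥0} f^n(x^j) z^n, D̄_f(z)x^j = x^j + ((−)f(x^j))·z, D_f(z)1 = D̄_f(z)1 = 1, and D(z)(v_1 ∧ ⋯ ∧ v_r) = D(z)v_1 ∧ ⋯ ∧ D(z)v_r. Then D_f(z) and D̄_f(z) are quasi-inverse: for every u ∈ ⋀, both D̄_f(z)(D_f(z)u) and D_f(z)(D̄_f(z)u) have constant coefficient (coefficient of z^0) equal to u, and for every k ≥ 1 their coefficient of z^k is a quasi-zero; i.e. D̄_f(z)(D_f(z)u) ⪰ u and D_f(z)(D̄_f(z)u) ⪰ u. -/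
/-!  The exterior semialgebra over a commutative semiring `A`, following
Chapman–Gatto–Rowen.  It is the free `A`-module on the basis consisting of a
unit symbol `1` (here `none`) together with all pairs `(ε, s)` where
`ε ∈ {+1, −1}` (here a `Bool`, `true = +1`) and `s` is a strictly decreasing
nonempty tuple of natural numbers (here a nonempty `Finset ℕ`, read in
decreasing order).  -/

namespace ExtSemi

/-- The basis: `none` is the unit `1`; `some (ε, s)` is the sign `ε` times the
strictly decreasing wedge monomial on the nonempty finite set `s`. -/
abbrev XB : Type := Option (Bool × {s : Finset ℕ // s.Nonempty})

variable (A : Type*) [CommSemiring A]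

/-- The exterior semialgebra `⋀`: the free `A`-module on `XB`. -/
abbrev Ext : Type _ := XB →₀ A

/-- Sign flip on the basis; the unit is fixed. -/
def negB : XB → XB
  | none => none
  | some (ε, s) => some (!ε, s)

/-- The negation map `(−)` on `⋀`: the `A`-linear map sending `(ε, s)` to
`(−ε, s)` and fixing `1`. -/
noncomputable def neg : Ext A →ₗ[A] Ext A := Finsupp.lmapDomain A A negB

/-- The signed basis element attached to a sign and a finite set; the empty set
gives the unit (on which the negation acts trivially). -/
noncomputable def bElem (ε : Bool) (t : Finset ℕ) : Ext A :=
  if h : t.Nonempty then Finsupp.single (some (ε, ⟨t, h⟩)) 1 else Finsupp.single none 1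

/-- The unit `1` of `⋀`. -/
noncomputable def one : Ext A := Finsupp.single (none : XB) 1

/-- The generator `x^i`. -/
noncomputable def xg (i : ℕ) : Ext A := bElem A true {i}

/-- `true` iff merging the decreasing enumerations of the disjoint sets `s`, `t`
(concatenated as `s ++ t`) into a single decreasing enumeration is an even
permutation, i.e. iff the number of pairs `(a ∈ s, b ∈ t)` with `a < b` is even. -/
def mergeEven (s t : Finset ℕ) : Bool :=
  decide ((∑ a ∈ s, (t.filter (fun b => a < b)).card) % 2 = 0)

/-- Wedge product of two basis elements: concatenate the tuples and multiply the
signs (`0` if the tuples share an entry). -/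
noncomputable def wB : XB → XB → Ext A
  | none, c => Finsupp.single c 1
  | some b, none => Finsupp.single (some b) 1
  | some (ε, s), some (δ, t) =>
      if s.1 ∩ t.1 = ∅ then bElem A ((ε == δ) == mergeEven s.1 t.1) (s.1 ∪ t.1) else 0

/-- The wedge product on `⋀`, extended `A`-bilinearly from the basis. -/
noncomputable def wedge (u v : Ext A) : Ext A :=
  u.sum fun b a => v.sum fun c a' => (a * a') • wB A b c

/-- Extend a map defined on the basis `A`-linearly to all of `⋀`. -/
noncomputable def ext1 (g : XB → Ext A) (u : Ext A) : Ext A := u.sum fun b a => a • g b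

/-- Quasi-zeros: elements of the form `w + (−)w`. -/
def IsQuasiZero (q : Ext A) : Prop := ∃ w : Ext A, q = w + neg A w

/-- The surpassing relation: `u ⪯ v` iff `v = u + q` for some quasi-zero `q`. -/
def Prec (u v : Ext A) : Prop := ∃ q : Ext A, IsQuasiZero A q ∧ v = u + q

/-- Twist an element by a sign. -/
noncomputable def twist (ε : Bool) (u : Ext A) : Ext A := if ε then u else neg A u

/-- `k`-fold application of the negation map. -/
noncomputable def negpow (k : ℕ) (u : Ext A) : Ext A := if k % 2 = 0 then u else neg A u

/-- Wedge product of a list of elements of `⋀`. -/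
noncomputable def wedgeL (l : List (Ext A)) : Ext A := l.foldr (wedge A) (one A)

/-- The wedge monomial `x^{j_1} ∧ ⋯ ∧ x^{j_r}` for an arbitrary tuple. -/
noncomputable def wedgeMon (l : List ℕ) : Ext A := wedgeL A (l.map (xg A))

/-- The decreasing enumeration of a finite set of naturals. -/
def descList (s : Finset ℕ) : List ℕ := (s.sort (· ≤ ·)).reverse

/-- The contraction `∂^j ⌟` on basis elements:
`∂^j ⌟ (x^{i_1} ∧ ⋯ ∧ x^{i_r}) = Σ_k (−)^{k−1}[i_k = j]·x^{i_1} ∧ ⋯ ∧ x^{i_{k-1}} ∧ x^{i_{k+1}} ∧ ⋯ ∧ x^{i_r}`,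
`∂^j ⌟ 1 = 0`; it commutes with the negation map. -/
noncomputable def contraB (j : ℕ) : XB → Ext A
  | none => 0
  | some (ε, s) =>
      if j ∈ s.1 then
        twist A ε (negpow A ((s.1.filter (fun b => j < b)).card) (bElem A true (s.1.erase j)))
      else 0

/-- The contraction `∂^j ⌟` on `⋀`, extended `A`-linearly. -/
noncomputable def contra (j : ℕ) (u : Ext A) : Ext A := ext1 A (contraB A j) u

/-- Make an `A`-linear operator on `⋀` commuting with the negation map out of a
coefficient family on decreasing lists (`F k l` = the `k`-th coefficient on the
monomial with decreasing tuple `l`); the unit is sent to itself in degree `0`. -/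
noncomputable def hsOn (F : ℕ → List ℕ → Ext A) (k : ℕ) : XB → Ext A
  | none => if k = 0 then one A else 0
  | some (ε, s) => twist A ε (F k (descList s.1))

open Finset.Nat in
/-- Coefficient of `z^k` in `σ₊(z)` on a monomial:
`σ_k (x^{i_1} ∧ ⋯ ∧ x^{i_r}) = Σ_{k_1+⋯+k_r=k} x^{i_1+k_1} ∧ ⋯ ∧ x^{i_r+k_r}`. -/
noncomputable def sigPlusL (k : ℕ) (l : List ℕ) : Ext A :=
  ∑ c ∈ antidiagonalTuple l.length k,
    wedgeMon A (List.ofFn fun i : Fin l.length => l.get i + c i)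

/-- Coefficient of `z^k` in the Schubert derivation `σ₊(z)`. -/
noncomputable def sigPlus (k : ℕ) : Ext A → Ext A := ext1 A (hsOn A (sigPlusL A) k)

open Finset.Nat in
/-- Coefficient of `w^{−k}` in `σ₋(w)`, where `σ₋(w) x^j = Σ_{k=0}^{j} x^{j−k} w^{−k}`. -/
noncomputable def sigMinusL (k : ℕ) (l : List ℕ) : Ext A :=
  ∑ c ∈ antidiagonalTuple l.length k,
    if ∀ i, c i ≤ l.get i then
      wedgeMon A (List.ofFn fun i : Fin l.length => l.get i - c i)
    else 0

/-- Coefficient of `w^{−k}` in the Schubert derivation `σ₋(w)`. -/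
noncomputable def sigMinus (k : ℕ) : Ext A → Ext A := ext1 A (hsOn A (sigMinusL A) k)

open Finset.Nat in
/-- Coefficient of `z^{−k}` in `σ̄₋(z)`, where `σ̄₋(z) x^j = x^j + ((−)x^{j−1}) z^{−1}`
(`x^{−1} := 0`). -/
noncomputable def sbarMinusL (k : ℕ) (l : List ℕ) : Ext A :=
  negpow A k (∑ c ∈ antidiagonalTuple l.length k,
    if ∀ i, c i ≤ 1 ∧ c i ≤ l.get i then
      wedgeMon A (List.ofFn fun i : Fin l.length => l.get i - c i)
    else 0)

/-- Coefficient of `z^{−k}` in the Schubert derivation `σ̄₋(z)`. -/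
noncomputable def sbarMinus (k : ℕ) : Ext A → Ext A := ext1 A (hsOn A (sbarMinusL A) k)

open Finset.Nat in
/-- Coefficient of `w^k` in `σ̄₊(w)`, where `σ̄₊(w) x^j = x^j + ((−)x^{j+1}) w`. -/
noncomputable def sbarPlusL (k : ℕ) (l : List ℕ) : Ext A :=
  negpow A k (∑ c ∈ antidiagonalTuple l.length k,
    if ∀ i, c i ≤ 1 then
      wedgeMon A (List.ofFn fun i : Fin l.length => l.get i + c i)
    else 0)

/-- Coefficient of `w^k` in the Schubert derivation `σ̄₊(w)`. -/
noncomputable def sbarPlus (k : ℕ) : Ext A → Ext A := ext1 A (hsOn A (sbarPlusL A) k)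

/-- The basis element `[x]^r_λ = x^{r−1+λ_1} ∧ x^{r−2+λ_2} ∧ ⋯ ∧ x^{λ_r}`
attached to a partition `λ` with at most `r` parts. -/
noncomputable def xlam (r : ℕ) (lam : Fin r → ℕ) : Ext A :=
  wedgeMon A (List.ofFn fun i : Fin r => (r - 1 - (i : ℕ)) + lam i)

end ExtSemi

namespace ExtSemi

variable (A : Type*) [CommSemiring A]

/-- Embed the free module `V = ⊕ A x^i` (represented as `ℕ →₀ A`) into `⋀`. -/
noncomputable def vIn (v : ℕ →₀ A) : Ext A := v.sum fun i a => a • xg A i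

open Finset.Nat in
/-- Coefficient of `z^n` in the HS-derivation `D_f(z)` on a decreasing tuple,
where `D_f(z) x^j = Σ_{n≥0} f^n(x^j) z^n` and `D_f(z)` is multiplicative. -/
noncomputable def DfL (f : Module.End A (ℕ →₀ A)) (n : ℕ) (l : List ℕ) : Ext A :=
  ∑ c ∈ antidiagonalTuple l.length n,
    wedgeL A (List.ofFn fun i : Fin l.length =>
      vIn A ((f ^ (c i)) (Finsupp.single (l.get i) 1)))

/-- Coefficient of `z^n` in the HS-derivation `D_f(z)`. -/
noncomputable def Df (f : Module.End A (ℕ →₀ A)) (n : ℕ) : Ext A → Ext A :=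
  ext1 A (hsOn A (DfL A f) n)

open Finset.Nat in
/-- Coefficient of `z^n` in the HS-derivation `D̄_f(z)` on a decreasing tuple,
where `D̄_f(z) x^j = x^j + ((−)f(x^j))·z` and `D̄_f(z)` is multiplicative. -/
noncomputable def DbarL (f : Module.End A (ℕ →₀ A)) (n : ℕ) (l : List ℕ) : Ext A :=
  ∑ c ∈ antidiagonalTuple l.length n,
    if ∀ i, c i ≤ 1 then
      wedgeL A (List.ofFn fun i : Fin l.length =>
        if c i = 0 then xg A (l.get i)
        else neg A (vIn A (f (Finsupp.single (l.get i) 1))))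
    else 0

/-- Coefficient of `z^n` in the HS-derivation `D̄_f(z)`. -/
noncomputable def Dbar (f : Module.End A (ℕ →₀ A)) (n : ℕ) : Ext A → Ext A :=
  ext1 A (hsOn A (DbarL A f) n)

section Helpers

theorem sum_adTuple_succ {M : Type*} [AddCommMonoid M] (k n : ℕ) (g : (Fin (k+1) → ℕ) → M) :
    ∑ c ∈ Finset.Nat.antidiagonalTuple (k+1) n, g c =
      ∑ p ∈ Finset.HasAntidiagonal.antidiagonal n, ∑ c ∈ Finset.Nat.antidiagonalTuple k p.2,
        g (Fin.cons p.1 c) := by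
  rw [Finset.sum_sigma']
  refine Finset.sum_bij' (fun c _ => ⟨(c 0, ∑ i, Fin.tail c i), Fin.tail c⟩)
    (fun q _ => Fin.cons q.1.1 q.2) ?_ ?_ ?_ ?_ ?_
  · intro c hc
    rw [Finset.Nat.mem_antidiagonalTuple, Fin.sum_univ_succ] at hc
    simp [Finset.Nat.mem_antidiagonalTuple, Fin.tail, hc]
  · rintro ⟨⟨a, b⟩, c⟩ hc
    simp only [Finset.mem_sigma, Finset.HasAntidiagonal.mem_antidiagonal, Finset.Nat.mem_antidiagonalTuple] at hc
    simp [Finset.Nat.mem_antidiagonalTuple, Fin.sum_univ_succ, hc.1, hc.2]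
  · intro c hc
    simp
  · rintro ⟨⟨a, b⟩, c⟩ hc
    simp only [Finset.mem_sigma, Finset.HasAntidiagonal.mem_antidiagonal, Finset.Nat.mem_antidiagonalTuple] at hc
    obtain ⟨_, rfl⟩ := hc
    simp
  · intro c hc
    simp

theorem descList_eq (s : Finset ℕ) : descList s = s.sort (· ≥ ·) := by
  unfold descList
  refine List.Perm.eq_of_pairwise' (r := (· ≥ ·)) ?_ (Finset.pairwise_sort _ _) ?_
  · rw [List.pairwise_reverse]
    exact Finset.pairwise_sort s (· ≤ ·)
  · refine (List.reverse_perm _).trans ?_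
    exact (Finset.sort_perm_toList s _).trans (Finset.sort_perm_toList s _).symm

theorem descList_insert (a : ℕ) (t : Finset ℕ) (h : ∀ b ∈ t, b < a) :
    descList (insert a t) = a :: descList t := by
  rw [descList_eq, descList_eq]
  exact Finset.sort_insert _ (fun b hb => (h b hb).le) (fun ha => lt_irrefl _ (h a ha))

theorem descList_empty : descList ∅ = [] := by
  rw [descList_eq]; simp

theorem descList_ne_nil (s : Finset ℕ) (hs : s.Nonempty) : descList s ≠ [] := by
  intro h
  have := congrArg List.length h
  simp [descList] at this
  simp [this] at hs

/-- bilinear wedge -/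
noncomputable def wL : Ext A →ₗ[A] Ext A →ₗ[A] Ext A :=
  Finsupp.linearCombination A (fun b => Finsupp.linearCombination A (wB A b))

theorem wedge_eq (u v : Ext A) : wedge A u v = wL A u v := by
  unfold wedge wL
  rw [Finsupp.linearCombination_apply, Finsupp.sum, Finsupp.sum, LinearMap.sum_apply]
  refine Finset.sum_congr rfl fun b _ => ?_
  rw [LinearMap.smul_apply, Finsupp.linearCombination_apply, Finsupp.smul_sum]
  simp only [smul_smul]

theorem ext1_eq (g : XB → Ext A) (u : Ext A) : ext1 A g u = Finsupp.linearCombination A g u := rfl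

theorem wL_single (b c : XB) : wL A (Finsupp.single b 1) (Finsupp.single c 1) = wB A b c := by
  simp [wL]

theorem neg_single (b : XB) (a : A) : neg A (Finsupp.single b a) = Finsupp.single (negB b) a := by
  simp [neg]

theorem negB_negB (b : XB) : negB (negB b) = b := by
  rcases b with _ | ⟨ε, s⟩ <;> simp [negB]

theorem neg_neg' (u : Ext A) : neg A (neg A u) = u := by
  induction u using Finsupp.induction_linear with
  | zero => simp
  | add u v hu hv => simp [hu, hv]
  | single b a => simp [neg_single, negB_negB]

/-- signed embedding of V -/
noncomputable def vS (ε : Bool) : (ℕ →₀ A) →ₗ[A] Ext A :=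
  Finsupp.linearCombination A (fun i => bElem A ε {i})

theorem bElem_singleton (ε : Bool) (i : ℕ) :
    bElem A ε {i} = Finsupp.single (some (ε, ⟨{i}, Finset.singleton_nonempty i⟩)) 1 := by
  simp [bElem]

theorem neg_bElem (ε : Bool) (t : Finset ℕ) (h : t.Nonempty) :
    neg A (bElem A ε t) = bElem A (!ε) t := by
  simp [bElem, h, neg_single, negB]

theorem vIn_eq (v : ℕ →₀ A) : vIn A v = vS A true v := rfl

theorem neg_vS (ε : Bool) (v : ℕ →₀ A) : neg A (vS A ε v) = vS A (!ε) v := by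
  induction v using Finsupp.induction_linear with
  | zero => simp
  | add u v hu hv => simp [hu, hv]
  | single b a => simp [vS, neg_bElem]

theorem neg_wB (ε : Bool) (s) (c : XB) : neg A (wB A (some (ε, s)) c) = wB A (some (!ε, s)) c := by
  rcases c with _ | ⟨δ, t⟩
  · simp [wB, neg_single, negB]
  · simp only [wB]
    split_ifs with h
    · rw [neg_bElem]
      · congr 1
        cases ε <;> cases δ <;> cases mergeEven s.1 t.1 <;> rfl
      · exact s.2.mono Finset.subset_union_left
    · simp

theorem neg_wL_vS (ε : Bool) (v : ℕ →₀ A) (u : Ext A) :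
    neg A (wL A (vS A ε v) u) = wL A (vS A (!ε) v) u := by
  induction v using Finsupp.induction_linear with
  | zero => simp
  | add u v hu hv => simp [hu, hv]
  | single i a =>
    induction u using Finsupp.induction_linear with
    | zero => simp
    | add u v hu hv => simp only [map_add, hu, hv]
    | single c a' =>
      rw [← mul_one a', ← smul_eq_mul a', ← Finsupp.smul_single]
      simp only [map_smul, vS, Finsupp.linearCombination_single, bElem_singleton,
        LinearMap.smul_apply, wL_single, neg_wB]

/-- general multiplicative family -/
noncomputable def HL (e : ℕ → Bool) (g : ℕ → Module.End A (ℕ →₀ A)) (n : ℕ) (l : List ℕ) : Ext A :=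
  ∑ c ∈ Finset.Nat.antidiagonalTuple l.length n,
    wedgeL A (List.ofFn fun i : Fin l.length =>
      vS A (e (c i)) (g (c i) (Finsupp.single (l.get i) 1)))

noncomputable def HS (e : ℕ → Bool) (g : ℕ → Module.End A (ℕ →₀ A)) (n : ℕ) :
    Ext A →ₗ[A] Ext A :=
  Finsupp.linearCombination A (hsOn A (HL A e g) n)

theorem HL_nil (e : ℕ → Bool) (g : ℕ → Module.End A (ℕ →₀ A)) (n : ℕ) :
    HL A e g n [] = if n = 0 then one A else 0 := by
  cases n with
  | zero => simp [HL, wedgeL]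
  | succ n => simp [HL]

theorem HL_cons (e : ℕ → Bool) (g : ℕ → Module.End A (ℕ →₀ A)) (n : ℕ) (i : ℕ) (l : List ℕ) :
    HL A e g n (i :: l) = ∑ p ∈ Finset.HasAntidiagonal.antidiagonal n,
      wL A (vS A (e p.1) (g p.1 (Finsupp.single i 1))) (HL A e g p.2 l) := by
  unfold HL
  simp only [List.length_cons]
  rw [sum_adTuple_succ]
  refine Finset.sum_congr rfl fun p _ => ?_
  rw [map_sum]
  refine Finset.sum_congr rfl fun c _ => ?_
  simp [List.ofFn_succ, wedgeL, wedge_eq]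

theorem wedgeL_zero (l : List (Ext A)) (h : 0 ∈ l) : wedgeL A l = 0 := by
  induction l with
  | nil => simp at h
  | cons a l ih =>
    have : wedgeL A (a :: l) = wL A a (wedgeL A l) := by simp [wedgeL, wedge_eq]
    rw [this]
    rcases List.mem_cons.1 h with h | h
    · simp [← h]
    · simp [ih h]

def eD : ℕ → Bool := fun _ => true
def eB : ℕ → Bool := fun n => decide (n = 0)
noncomputable def gD (f : Module.End A (ℕ →₀ A)) : ℕ → Module.End A (ℕ →₀ A) := fun n => f ^ n
noncomputable def gB (f : Module.End A (ℕ →₀ A)) : ℕ → Module.End A (ℕ →₀ A)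
  | 0 => 1
  | 1 => f
  | _ => 0

theorem Df_eq (f : Module.End A (ℕ →₀ A)) (n : ℕ) (u : Ext A) :
    Df A f n u = HS A eD (gD A f) n u := rfl

theorem DbarL_eq (f : Module.End A (ℕ →₀ A)) (n : ℕ) (l : List ℕ) :
    DbarL A f n l = HL A eB (gB A f) n l := by
  unfold DbarL HL
  refine Finset.sum_congr rfl fun c _ => ?_
  split_ifs with h
  · congr 2
    funext i
    have hi := h i
    rcases Nat.le_one_iff_eq_zero_or_eq_one.1 hi with h0 | h0
    · simp [h0, eB, gB, vS, xg]
    · simp [h0, eB, gB, vIn_eq, neg_vS]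
  · push Not at h
    obtain ⟨i, hi⟩ := h
    symm
    apply wedgeL_zero
    rw [List.mem_ofFn]
    refine ⟨i, ?_⟩
    have : gB A f (c i) = 0 := by
      match c i, hi with
      | n + 2, _ => rfl
    simp [this]

theorem Dbar_eq (f : Module.End A (ℕ →₀ A)) (n : ℕ) (u : Ext A) :
    Dbar A f n u = HS A eB (gB A f) n u := by
  unfold Dbar HS
  rw [ext1_eq]
  congr 3
  funext n l
  exact DbarL_eq A f n l

theorem HL_zero (e : ℕ → Bool) (g : ℕ → Module.End A (ℕ →₀ A)) (he : e 0 = true) (hg : g 0 = 1)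
    (s : Finset ℕ) : HL A e g 0 (descList s) = bElem A true s := by
  induction s using Finset.induction_on_max with
  | empty => simp [descList_empty, HL_nil, bElem, one]
  | insert a s h ih =>
    rw [descList_insert a s h, HL_cons]
    simp only [Finset.Nat.antidiagonal_zero, Finset.sum_singleton, ih, he, hg, vS,
      Module.End.one_apply, Finsupp.linearCombination_single, one_smul, bElem_singleton]
    unfold bElem
    by_cases hs : s.Nonempty
    · have h1 : a ∉ s := fun ha => lt_irrefl _ (h a ha)
      have h2 : {b ∈ s | a < b} = ∅ := by
        rw [Finset.filter_eq_empty_iff]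
        intro b hb
        exact (h b hb).le.not_gt
      simp [hs, wL_single, wB, h1, mergeEven, h2, bElem]
    · rw [Finset.not_nonempty_iff_eq_empty] at hs
      subst hs
      simp [wL_single, wB]

theorem HS_zero (e : ℕ → Bool) (g : ℕ → Module.End A (ℕ →₀ A)) (he : e 0 = true) (hg : g 0 = 1)
    (u : Ext A) : HS A e g 0 u = u := by
  induction u using Finsupp.induction_linear with
  | zero => simp
  | add u v hu hv => simp [hu, hv]
  | single b a =>
    simp only [HS, Finsupp.linearCombination_single]
    have : hsOn A (HL A e g) 0 b = Finsupp.single b 1 := by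
      rcases b with _ | ⟨ε, s⟩
      · simp [hsOn, one]
      · simp only [hsOn, HL_zero A e g he hg, twist]
        cases ε
        · simp [neg_bElem A true s.1 s.2]; simp [bElem, s.2]
        · simp [bElem, s.2]
    simp [this]

/-- Symmetric elements without unit component. -/
def Sym (w : Ext A) : Prop := w none = 0 ∧ ∀ s, w (some (true, s)) = w (some (false, s))

theorem Sym.isQuasiZero (w : Ext A) (h : Sym A w) : IsQuasiZero A w := by
  classical
  have hinj : Function.Injective negB := fun a b hab => by
    rw [← negB_negB a, hab, negB_negB]
  refine ⟨w.filter (fun b => ∃ s, b = some (true, s)), ?_⟩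
  ext b
  have hn : ∀ u : Ext A, neg A u b = u (negB b) := by
    intro u
    conv_lhs => rw [← negB_negB b]
    exact Finsupp.mapDomain_apply hinj u (negB b)
  rw [Finsupp.add_apply, hn]
  rcases b with _ | ⟨ε, s⟩
  · simp [Finsupp.filter_apply, negB, h.1]
  · cases ε <;> simp [Finsupp.filter_apply, negB, h.2]

/-! base change -/

variable {A} {B : Type*} [CommSemiring B]

noncomputable def mE {X : Type*} (φ : A →+* B) : (X →₀ A) →+ (X →₀ B) :=
  Finsupp.mapRange.addMonoidHom φ.toAddMonoidHom

@[simp] theorem mE_apply {X : Type*} (φ : A →+* B) (u : X →₀ A) (x : X) :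
    mE φ u x = φ (u x) := by simp [mE]

@[simp] theorem mE_single {X : Type*} (φ : A →+* B) (x : X) (a : A) :
    mE φ (Finsupp.single x a) = Finsupp.single x (φ a) := by simp [mE]

theorem mE_smul {X : Type*} (φ : A →+* B) (a : A) (u : X →₀ A) :
    mE φ (a • u) = φ a • mE φ u := by ext; simp

theorem mE_lc {X Y : Type*} (φ : A →+* B) (g : X → (Y →₀ A)) (g' : X → (Y →₀ B))
    (h : ∀ x, mE φ (g x) = g' x) (u : X →₀ A) :
    mE φ (Finsupp.linearCombination A g u) = Finsupp.linearCombination B g' (mE φ u) := by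
  induction u using Finsupp.induction_linear with
  | zero => simp
  | add u v hu hv => simp [hu, hv]
  | single b a => simp [mE_smul, h]

theorem mE_bElem (φ : A →+* B) (ε : Bool) (t : Finset ℕ) : mE φ (bElem A ε t) = bElem B ε t := by
  unfold bElem; split_ifs <;> simp

theorem mE_wB (φ : A →+* B) (b c : XB) : mE φ (wB A b c) = wB B b c := by
  rcases b with _ | ⟨ε, s⟩ <;> rcases c with _ | ⟨δ, t⟩ <;> simp only [wB] <;>
    try simp
  split_ifs
  · exact mE_bElem _ _ _
  · simp

theorem mE_wL (φ : A →+* B) (u v : Ext A) : mE φ (wL A u v) = wL B (mE φ u) (mE φ v) := by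
  induction u using Finsupp.induction_linear with
  | zero => simp
  | add u v hu hv => simp [hu, hv]
  | single b a =>
    simp only [wL, Finsupp.linearCombination_single, LinearMap.smul_apply, mE_smul, mE_single]
    rw [mE_lc φ _ _ (mE_wB φ b)]

theorem mE_neg (φ : A →+* B) (u : Ext A) : mE φ (neg A u) = neg B (mE φ u) := by
  induction u using Finsupp.induction_linear with
  | zero => simp
  | add u v hu hv => simp [hu, hv]
  | single b a => simp [neg_single]

theorem mE_HL (φ : A →+* B) (e : ℕ → Bool) (g : ℕ → Module.End A (ℕ →₀ A))
    (g' : ℕ → Module.End B (ℕ →₀ B)) (h : ∀ n v, mE φ (g n v) = g' n (mE φ v)) (l : List ℕ) :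
    ∀ n, mE φ (HL A e g n l) = HL B e g' n l := by
  induction l with
  | nil => intro n; simp only [HL_nil]; split_ifs <;> simp [one]
  | cons i l ih =>
    intro n
    simp only [HL_cons, map_sum, mE_wL, ih, vS]
    refine Finset.sum_congr rfl fun p _ => ?_
    rw [mE_lc φ _ _ (fun i => mE_bElem φ (e p.1) {i}), h]
    simp

theorem mE_HS (φ : A →+* B) (e : ℕ → Bool) (g : ℕ → Module.End A (ℕ →₀ A))
    (g' : ℕ → Module.End B (ℕ →₀ B)) (h : ∀ n v, mE φ (g n v) = g' n (mE φ v)) (n : ℕ)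
    (u : Ext A) : mE φ (HS A e g n u) = HS B e g' n (mE φ u) := by
  unfold HS
  apply mE_lc
  rintro (_ | ⟨ε, s⟩)
  · simp only [hsOn]; split_ifs <;> simp [one]
  · simp only [hsOn, twist]; split_ifs <;> simp [mE_neg, mE_HL φ e g g' h]

theorem mE_gD (φ : A →+* B) (f : Module.End A (ℕ →₀ A)) (f' : Module.End B (ℕ →₀ B))
    (h : ∀ v, mE φ (f v) = f' (mE φ v)) (n : ℕ) : ∀ v, mE φ (gD A f n v) = gD B f' n (mE φ v) := by
  induction n with
  | zero => simp [gD]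
  | succ n ih =>
    intro v
    simp only [gD] at ih
    simp [gD, pow_succ, ih, h]

theorem mE_gB (φ : A →+* B) (f : Module.End A (ℕ →₀ A)) (f' : Module.End B (ℕ →₀ B))
    (h : ∀ v, mE φ (f v) = f' (mE φ v)) (n : ℕ) : ∀ v, mE φ (gB A f n v) = gB B f' n (mE φ v) := by
  match n with
  | 0 => simp [gB]
  | 1 => simpa [gB] using h
  | n + 2 => simp [gB]

variable (A) in
noncomputable def Q1 (f : Module.End A (ℕ →₀ A)) (k : ℕ) (u : Ext A) : Ext A :=
  ∑ j ∈ Finset.range (k + 1), HS A eB (gB A f) j (HS A eD (gD A f) (k - j) u)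

variable (A) in
noncomputable def Q2 (f : Module.End A (ℕ →₀ A)) (k : ℕ) (u : Ext A) : Ext A :=
  ∑ j ∈ Finset.range (k + 1), HS A eD (gD A f) j (HS A eB (gB A f) (k - j) u)

theorem mE_Q1 (φ : A →+* B) (f : Module.End A (ℕ →₀ A)) (f' : Module.End B (ℕ →₀ B))
    (h : ∀ v, mE φ (f v) = f' (mE φ v)) (k : ℕ) (u : Ext A) :
    mE φ (Q1 A f k u) = Q1 B f' k (mE φ u) := by
  simp only [Q1, map_sum, mE_HS φ eD _ _ (mE_gD φ f f' h), mE_HS φ eB _ _ (mE_gB φ f f' h)]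

theorem mE_Q2 (φ : A →+* B) (f : Module.End A (ℕ →₀ A)) (f' : Module.End B (ℕ →₀ B))
    (h : ∀ v, mE φ (f v) = f' (mE φ v)) (k : ℕ) (u : Ext A) :
    mE φ (Q2 A f k u) = Q2 B f' k (mE φ u) := by
  simp only [Q2, map_sum, mE_HS φ eD _ _ (mE_gD φ f f' h), mE_HS φ eB _ _ (mE_gB φ f f' h)]

theorem Sym.map (φ : A →+* B) (w : Ext A) (h : Sym A w) : Sym B (mE φ w) := by
  refine ⟨by simp [h.1], fun s => by simp [h.2]⟩

theorem Sym.of_map (φ : A →+* B) (hφ : Function.Injective φ) (w : Ext A) (h : Sym B (mE φ w)) :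
    Sym A w := by
  refine ⟨hφ (by simpa using h.1), fun s => hφ (by simpa using h.2 s)⟩

theorem exists_push (φ : A →+* B) (f : Module.End A (ℕ →₀ A)) :
    ∃ f' : Module.End B (ℕ →₀ B), ∀ v, mE φ (f v) = f' (mE φ v) := by
  refine ⟨Finsupp.linearCombination B (fun j => mE φ (f (Finsupp.single j 1))), fun v => ?_⟩
  rw [← mE_lc φ (fun j => f (Finsupp.single j 1)) _ (fun _ => rfl)]
  congr 1
  induction v using Finsupp.induction_linear with
  | zero => simp
  | add u v hu hv => simp [hu, hv]
  | single b a => simp [← map_smul]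

theorem mE_surj {X : Type*} (φ : A →+* B) (hφ : Function.Surjective φ) (v : X →₀ B) :
    ∃ v', mE φ v' = v :=
  Finsupp.mapRange_surjective φ (map_zero φ) hφ v

theorem exists_pull (φ : A →+* B) (hφ : Function.Surjective φ) (f : Module.End B (ℕ →₀ B)) :
    ∃ f' : Module.End A (ℕ →₀ A), ∀ v, mE φ (f' v) = f (mE φ v) := by
  choose c hc using fun j => mE_surj φ hφ (f (Finsupp.single j 1))
  refine ⟨Finsupp.linearCombination A c, fun v => ?_⟩
  rw [mE_lc φ c _ hc]
  induction v using Finsupp.induction_linear with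
  | zero => simp
  | add u v hu hv => simp [hu, hv]
  | single b a => simp [← map_smul]

end Helpers

section RingLevel

open ExteriorAlgebra PowerSeries

variable (R : Type*) [CommRing R]

/-- sign -/
def sg (ε : Bool) : R := if ε then 1 else -1

noncomputable def ix (i : ℕ) : ExteriorAlgebra R (ℕ →₀ R) := ι R (Finsupp.single i 1)

noncomputable def mm (t : Finset ℕ) : ExteriorAlgebra R (ℕ →₀ R) := ((descList t).map (ix R)).prod

theorem mm_insert (a : ℕ) (t : Finset ℕ) (h : ∀ b ∈ t, b < a) :
    mm R (insert a t) = ix R a * mm R t := by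
  simp [mm, descList_insert a t h]

theorem ix_mul_mm (i : ℕ) (t : Finset ℕ) :
    ix R i * mm R t = if i ∈ t then 0 else
      (-1 : R) ^ (t.filter (fun b => i < b)).card • mm R (insert i t) := by
  induction t using Finset.induction_on_max with
  | empty =>
    have := mm_insert R i ∅ (by simp)
    simp only [Finset.notMem_empty, if_false, Finset.filter_empty, Finset.card_empty, pow_zero,
      one_smul, this]
  | insert a t h ih =>
    have hat : a ∉ t := fun ha => lt_irrefl _ (h a ha)
    rcases lt_trichotomy i a with hi | rfl | hi
    · have h1 : ix R i * ix R a = - (ix R a * ix R i) :=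
        eq_neg_of_add_eq_zero_left (ι_add_mul_swap _ _)
      rw [mm_insert R a t h, ← mul_assoc, h1, neg_mul, mul_assoc, ih]
      by_cases hit : i ∈ t
      · simp [hit]
      · rw [if_neg hit, if_neg (by simp [hit, hi.ne]), Finset.filter_insert, if_pos hi,
          Finset.card_insert_of_notMem (by simp [hat]), Finset.insert_comm, mm_insert R a (insert i t)]
        · simp [pow_succ]
        · intro b hb
          rcases Finset.mem_insert.1 hb with rfl | hb
          · exact hi
          · exact h b hb
    · rw [mm_insert R i t h, ← mul_assoc]
      simp [ix]
    · have hlt : ∀ b ∈ insert a t, b < i := by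
        intro b hb
        rcases Finset.mem_insert.1 hb with rfl | hb
        · exact hi
        · exact (h b hb).trans hi
      have hni : i ∉ insert a t := fun ha => lt_irrefl _ (hlt i ha)
      have h2 : {b ∈ insert a t | i < b} = ∅ := by
        rw [Finset.filter_eq_empty_iff]
        intro b hb
        exact (hlt b hb).le.not_gt
      rw [if_neg hni, h2, mm_insert R i (insert a t) hlt]
      simp

noncomputable def phB : XB → ExteriorAlgebra R (ℕ →₀ R)
  | none => 1
  | some (ε, s) => sg R ε • mm R s.1

noncomputable def Ph : Ext R →ₗ[R] ExteriorAlgebra R (ℕ →₀ R) := Finsupp.linearCombination R (phB R)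

theorem Ph_single (b : XB) : Ph R (Finsupp.single b 1) = phB R b := by simp [Ph]

theorem Ph_bElem (ε : Bool) (t : Finset ℕ) (h : t.Nonempty) :
    Ph R (bElem R ε t) = sg R ε • mm R t := by
  simp [bElem, h, Ph_single, phB]

theorem Ph_wB (ε : Bool) (i : ℕ) (b : XB) :
    Ph R (wB R (some (ε, ⟨{i}, Finset.singleton_nonempty i⟩)) b) =
      (sg R ε • ix R i) * phB R b := by
  have hm : mm R {i} = ix R i := by
    have := mm_insert R i ∅ (by simp)
    simpa [mm, descList_empty] using this
  rcases b with _ | ⟨δ, t⟩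
  · simp [wB, Ph_single, phB, hm]
  · simp only [wB, phB]
    rw [smul_mul_assoc, mul_smul_comm, ix_mul_mm]
    by_cases hi : i ∈ t.1
    · simp [hi]
    · have h0 : ({i} : Finset ℕ) ∩ t.1 = ∅ := by simp [hi]
      rw [if_pos h0, if_neg hi, Ph_bElem R _ _ (by simp), smul_smul, smul_smul,
        ← Finset.insert_eq]
      congr 1
      simp only [mergeEven, Finset.sum_singleton]
      rcases Nat.even_or_odd (t.1.filter (fun b => i < b)).card with he | ho
      · rw [he.neg_one_pow, decide_eq_true (Nat.even_iff.1 he)]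
        cases ε <;> cases δ <;> simp [sg]
      · rw [ho.neg_one_pow, decide_eq_false (by rw [Nat.odd_iff.1 ho]; simp)]
        cases ε <;> cases δ <;> simp [sg]

theorem Ph_wL (ε : Bool) (v : ℕ →₀ R) (u : Ext R) :
    Ph R (wL R (vS R ε v) u) = ι R (sg R ε • v) * Ph R u := by
  induction v using Finsupp.induction_linear with
  | zero => simp
  | add u v hu hv => simp only [map_add, hu, hv, smul_add, add_mul, LinearMap.add_apply]
  | single i a =>
    induction u using Finsupp.induction_linear with
    | zero => simp
    | add u v hu hv => simp only [map_add, hu, hv, mul_add]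
    | single c a' =>
      rw [← mul_one a', ← smul_eq_mul a', ← Finsupp.smul_single, ← mul_one a, ← smul_eq_mul a,
        ← Finsupp.smul_single]
      simp only [map_smul, vS, Finsupp.linearCombination_single, bElem_singleton, one_smul,
        LinearMap.smul_apply, wL_single, Ph_wB, Ph_single, ix, smul_mul_assoc, mul_smul_comm]
      rw [smul_comm (sg R ε) a]

/-! the derivations on the exterior algebra -/

noncomputable def gser (h : ℕ → Module.End R (ℕ →₀ R)) :
    (ℕ →₀ R) →ₗ[R] PowerSeries (ExteriorAlgebra R (ℕ →₀ R)) where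
  toFun v := PowerSeries.mk fun n => ι R (h n v)
  map_add' u v := by ext n; simp
  map_smul' a v := by ext n; simp

theorem gser_sq (h : ℕ → Module.End R (ℕ →₀ R)) (v : ℕ →₀ R) : gser R h v * gser R h v = 0 := by
  ext n
  rw [PowerSeries.coeff_mul]
  simp only [gser, LinearMap.coe_mk, AddHom.coe_mk, PowerSeries.coeff_mk, map_zero]
  refine Finset.sum_involution (fun p _ => p.swap) ?_ ?_ ?_ ?_
  · intro p _
    exact ι_add_mul_swap _ _
  · rintro ⟨a, b⟩ _ hne heq
    simp only [Prod.swap_prod_mk, Prod.mk.injEq] at heq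
    apply hne
    simp [heq.1]
  · intro p hp
    simpa [add_comm] using hp
  · intro p _
    simp

noncomputable def Dh (h : ℕ → Module.End R (ℕ →₀ R)) :
    ExteriorAlgebra R (ℕ →₀ R) →ₐ[R] PowerSeries (ExteriorAlgebra R (ℕ →₀ R)) :=
  ExteriorAlgebra.lift R ⟨gser R h, gser_sq R h⟩

noncomputable def Dc (h : ℕ → Module.End R (ℕ →₀ R)) (n : ℕ) :
    Module.End R (ExteriorAlgebra R (ℕ →₀ R)) where
  toFun x := PowerSeries.coeff n (Dh R h x)
  map_add' u v := by simp
  map_smul' a v := by simp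

theorem Dc_one (h : ℕ → Module.End R (ℕ →₀ R)) (n : ℕ) :
    Dc R h n 1 = if n = 0 then 1 else 0 := by
  simp [Dc, PowerSeries.coeff_one]

theorem Dc_mul (h : ℕ → Module.End R (ℕ →₀ R)) (n : ℕ) (v : ℕ →₀ R)
    (x : ExteriorAlgebra R (ℕ →₀ R)) :
    Dc R h n (ι R v * x) = ∑ p ∈ Finset.HasAntidiagonal.antidiagonal n,
      ι R (h p.1 v) * Dc R h p.2 x := by
  simp [Dc, PowerSeries.coeff_mul, Dh, gser]

theorem Ph_HL (e : ℕ → Bool) (g : ℕ → Module.End R (ℕ →₀ R)) (l : List ℕ) : ∀ n,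
    Ph R (HL R e g n l) = Dc R (fun n => sg R (e n) • g n) n ((l.map (ix R)).prod) := by
  induction l with
  | nil =>
    intro n
    simp only [HL_nil, List.map_nil, List.prod_nil, Dc_one]
    split_ifs <;> simp [one, Ph_single, phB]
  | cons i l ih =>
    intro n
    simp only [HL_cons, List.map_cons, List.prod_cons, map_sum, Ph_wL, ih]
    rw [ix, Dc_mul]
    rfl

theorem Ph_neg_HL (e : ℕ → Bool) (g : ℕ → Module.End R (ℕ →₀ R)) (l : List ℕ) (hl : l ≠ [])
    (n : ℕ) : Ph R (neg R (HL R e g n l)) = - Ph R (HL R e g n l) := by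
  match l, hl with
  | i :: l, _ =>
    simp only [HL_cons, map_sum, neg_wL_vS, Ph_wL]
    rw [← Finset.sum_neg_distrib]
    refine Finset.sum_congr rfl fun p _ => ?_
    cases e p.1 <;> simp [sg]

theorem Ph_HS (e : ℕ → Bool) (g : ℕ → Module.End R (ℕ →₀ R)) (n : ℕ) (u : Ext R) :
    Ph R (HS R e g n u) = Dc R (fun n => sg R (e n) • g n) n (Ph R u) := by
  induction u using Finsupp.induction_linear with
  | zero => simp
  | add u v hu hv => simp only [map_add, hu, hv]
  | single b a =>
    rw [← mul_one a, ← smul_eq_mul a, ← Finsupp.smul_single]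
    simp only [map_smul, Ph_single]
    congr 1
    simp only [HS, Finsupp.linearCombination_single, one_smul]
    rcases b with _ | ⟨ε, s⟩
    · simp only [hsOn, phB, Dc_one]
      split_ifs <;> simp [one, Ph_single, phB]
    · simp only [hsOn, phB, map_smul, mm, ← Ph_HL, twist]
      cases ε
      · simp [sg, Ph_neg_HL R e g _ (descList_ne_nil s.1 s.2)]
      · simp [sg]

abbrev EA := ExteriorAlgebra R (ℕ →₀ R)

noncomputable def Lv (v : ℕ →₀ R) : Module.End R (EA R) := LinearMap.mulLeft R (ι R v)

noncomputable def PS (h : ℕ → Module.End R (ℕ →₀ R)) : PowerSeries (Module.End R (EA R)) :=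
  PowerSeries.mk (Dc R h)

theorem PS_mul (h : ℕ → Module.End R (ℕ →₀ R)) (v : ℕ →₀ R) :
    PS R h * PowerSeries.C (Lv R v) = PowerSeries.mk (fun n => Lv R (h n v)) * PS R h := by
  ext n : 1
  rw [PowerSeries.coeff_mul_C, PowerSeries.coeff_mul]
  refine LinearMap.ext fun x => ?_
  simp only [PS, PowerSeries.coeff_mk, Module.End.mul_apply, Lv, LinearMap.mulLeft_apply, Dc_mul,
    LinearMap.sum_apply]

noncomputable def hD (f : Module.End R (ℕ →₀ R)) : ℕ → Module.End R (ℕ →₀ R) := fun n => sg R (eD n) • gD R f n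
noncomputable def hB (f : Module.End R (ℕ →₀ R)) : ℕ → Module.End R (ℕ →₀ R) := fun n => sg R (eB n) • gB R f n

noncomputable def GG (f : Module.End R (ℕ →₀ R)) (v : ℕ →₀ R) : PowerSeries (Module.End R (EA R)) :=
  PowerSeries.mk (fun n => Lv R ((f ^ n) v))

theorem PSD_mul (f : Module.End R (ℕ →₀ R)) (v : ℕ →₀ R) :
    PS R (hD R f) * PowerSeries.C (Lv R v) = GG R f v * PS R (hD R f) := by
  rw [PS_mul]
  simp [GG, hD, sg, eD, gD]

theorem Lv_neg (v : ℕ →₀ R) : Lv R (-v) = - Lv R v := by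
  refine LinearMap.ext fun x => ?_
  simp [Lv]

theorem Lv_zero : Lv R 0 = 0 := by
  refine LinearMap.ext fun x => ?_
  simp [Lv]

theorem PSB_mul (f : Module.End R (ℕ →₀ R)) (v : ℕ →₀ R) :
    PS R (hB R f) * PowerSeries.C (Lv R v) =
      (PowerSeries.C (Lv R v) - PowerSeries.X * PowerSeries.C (Lv R (f v))) * PS R (hB R f) := by
  rw [PS_mul]
  congr 1
  ext n : 1
  match n with
  | 0 => simp [hB, sg, eB, gB]
  | 1 => simp [hB, sg, eB, gB, PowerSeries.coeff_C, Lv_neg, PowerSeries.coeff_succ_X_mul]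
  | n + 2 => simp [hB, sg, eB, gB, Lv_zero, PowerSeries.coeff_X]

theorem GG_eq (f : Module.End R (ℕ →₀ R)) (v : ℕ →₀ R) :
    GG R f v = PowerSeries.C (Lv R v) + PowerSeries.X * GG R f (f v) := by
  ext n : 1
  match n with
  | 0 => simp [GG]
  | n + 1 => simp [GG, PowerSeries.coeff_C, PowerSeries.coeff_succ_X_mul, pow_succ]

theorem PSB_GG (f : Module.End R (ℕ →₀ R)) (v : ℕ →₀ R) :
    PS R (hB R f) * GG R f v = PowerSeries.C (Lv R v) * PS R (hB R f) := by
  have key : ∀ v, PS R (hB R f) * GG R f v = PowerSeries.C (Lv R v) * PS R (hB R f) +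
      PowerSeries.X * (PS R (hB R f) * GG R f (f v) - PowerSeries.C (Lv R (f v)) * PS R (hB R f)) := by
    intro v
    rw [GG_eq R f v, mul_add, PSB_mul, ← mul_assoc (PS R (hB R f)) PowerSeries.X,
      (PowerSeries.commute_X _).eq, sub_mul, mul_sub, mul_assoc, mul_assoc]
    abel
  ext n : 1
  induction n generalizing v with
  | zero => rw [key]; simp
  | succ n ih => rw [key]; simp [PowerSeries.coeff_succ_X_mul, ih]

theorem comm_imp (M : PowerSeries (Module.End R (EA R)))
    (hM : ∀ v, M * PowerSeries.C (Lv R v) = PowerSeries.C (Lv R v) * M) (n : ℕ) (a : EA R) :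
    ∀ x, PowerSeries.coeff n M (a * x) = a * PowerSeries.coeff n M x := by
  induction a using ExteriorAlgebra.induction with
  | algebraMap r => intro x; simp [← Algebra.smul_def]
  | ι v =>
    intro x
    have := congrArg (PowerSeries.coeff n) (hM v)
    rw [PowerSeries.coeff_mul_C, PowerSeries.coeff_C_mul] at this
    exact LinearMap.congr_fun this x
  | mul a b ha hb => intro x; rw [mul_assoc, ha, hb, mul_assoc]
  | add a b ha hb => intro x; rw [add_mul, map_add, ha, hb, add_mul]

theorem prod_zero (h h' : ℕ → Module.End R (ℕ →₀ R))
    (hM : ∀ v, (PS R h * PS R h') * PowerSeries.C (Lv R v) =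
      PowerSeries.C (Lv R v) * (PS R h * PS R h')) (n : ℕ) (hn : 1 ≤ n) (a : EA R) :
    ∑ j ∈ Finset.range (n + 1), Dc R h j (Dc R h' (n - j) a) = 0 := by
  have h1 := comm_imp R _ hM n a 1
  have h2 : ∀ x, PowerSeries.coeff n (PS R h * PS R h') x =
      ∑ j ∈ Finset.range (n + 1), Dc R h j (Dc R h' (n - j) x) := by
    intro x
    rw [PowerSeries.coeff_mul, Finset.Nat.sum_antidiagonal_eq_sum_range_succ_mk]
    simp [PS]
  rw [h2, mul_one, h2] at h1
  rw [h1]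
  convert mul_zero a
  refine Finset.sum_eq_zero fun j _ => ?_
  rw [Dc_one]
  split_ifs with h0
  · rw [Dc_one, if_neg (by omega)]
  · simp

theorem mm_eq (s : Finset ℕ) : ∃ c : R, c * c = 1 ∧
    mm R s = c • (Finsupp.basisSingleOne (R := R) (ι := ℕ)).ExteriorAlgebra s := by
  refine ⟨((Equiv.Perm.sign (Fin.revPerm (n := s.card)) : ℤ) : R), ?_, ?_⟩
  · rw [← Int.cast_mul, ← Units.val_mul]; simp
  · rw [ExteriorAlgebra.basis_apply_ofCard (n := s.card) _ rfl]
    unfold mm descList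
    have : (s.sort (· ≤ ·)).reverse =
        List.ofFn (fun i => s.orderEmbOfFin rfl (Fin.revPerm i)) := by
      rw [← Finset.listMap_orderEmbOfFin_finRange s rfl, ← List.map_reverse, List.finRange_reverse,
        List.ofFn_eq_map, List.map_map]
      rfl
    rw [this, List.map_ofFn]
    have h2 := (ExteriorAlgebra.ιMulti R s.card).map_perm
      (fun i => (Finsupp.single (s.orderEmbOfFin rfl i) 1 : ℕ →₀ R)) Fin.revPerm
    rw [ExteriorAlgebra.ιMulti_apply] at h2
    refine Eq.trans h2 ?_
    rw [Units.smul_def, Int.cast_smul_eq_zsmul]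
    congr 1

theorem Ph_inj (w : Ext R) (h : Ph R w = 0) : Sym R w := by
  classical
  choose c hc hm using mm_eq R
  let B := (Finsupp.basisSingleOne (R := R) (ι := ℕ)).ExteriorAlgebra
  have hB : ∀ s t, B.repr (mm R s) t = if s = t then c s else 0 := by
    intro s t
    rw [hm]
    change B.repr (c s • B s) t = _
    simp [Finsupp.single_apply]
  have hone : mm R ∅ = 1 := by simp [mm, descList_empty]
  have h1 : ∀ w, B.repr (Ph R w) ∅ = c ∅ * w none := by
    intro w
    induction w using Finsupp.induction_linear with
    | zero => simp
    | add u v hu hv => simp [hu, hv, mul_add]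
    | single b a =>
      rcases b with _ | ⟨ε, s⟩
      · simp [Ph, phB, ← hone, hB, mul_comm]
      · simp [Ph, phB, hB, s.2.ne_empty]
  have h2 : ∀ (s : {s : Finset ℕ // s.Nonempty}) w, B.repr (Ph R w) s.1 =
      c s.1 * (w (some (true, s)) - w (some (false, s))) := by
    intro s w
    induction w using Finsupp.induction_linear with
    | zero => simp
    | add u v hu hv => simp only [map_add, Finsupp.add_apply, hu, hv]; ring
    | single b a =>
      rcases b with _ | ⟨ε, t⟩
      · simp [Ph, phB, ← hone, hB, s.2.ne_empty.symm]
      · by_cases hst : t = s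
        · subst hst
          cases ε <;> simp [Ph, phB, hB, sg, mul_comm]
        · have : t.1 ≠ s.1 := fun h => hst (Subtype.ext h)
          simp [Ph, phB, hB, hst, this, Finsupp.single_apply]
  have canc : ∀ s (x : R), c s * x = 0 → x = 0 := by
    intro s x hx
    calc x = c s * c s * x := by rw [hc, one_mul]
      _ = 0 := by rw [mul_assoc, hx, mul_zero]
  refine ⟨canc ∅ _ ?_, fun s => sub_eq_zero.1 (canc s.1 _ ?_)⟩
  · rw [← h1, h]; simp
  · rw [← h2, h]; simp

theorem ring_Q1 (f : Module.End R (ℕ →₀ R)) (k : ℕ) (hk : 1 ≤ k) (u : Ext R) :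
    Sym R (Q1 R f k u) := by
  apply Ph_inj
  simp only [Q1, map_sum, Ph_HS]
  refine prod_zero R (hB R f) (hD R f) (fun v => ?_) k hk _
  rw [mul_assoc, PSD_mul, ← mul_assoc, PSB_GG, mul_assoc]

theorem ring_Q2 (f : Module.End R (ℕ →₀ R)) (k : ℕ) (hk : 1 ≤ k) (u : Ext R) :
    Sym R (Q2 R f k u) := by
  apply Ph_inj
  simp only [Q2, map_sum, Ph_HS]
  refine prod_zero R (hD R f) (hB R f) (fun v => ?_) k hk _
  rw [mul_assoc, PSB_mul, ← mul_assoc, mul_sub, PSD_mul, ← mul_assoc (PS R (hD R f)),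
    (PowerSeries.commute_X _).eq, mul_assoc PowerSeries.X, PSD_mul, ← mul_assoc PowerSeries.X,
    ← sub_mul, GG_eq R f v, add_sub_cancel_right, mul_assoc]

end RingLevel

section Final

variable {A}

theorem transfer (f : Module.End A (ℕ →₀ A)) (u : Ext A) (k : ℕ) (hk : 1 ≤ k) :
    Sym A (Q1 A f k u) ∧ Sym A (Q2 A f k u) := by
  let φ : MvPolynomial A ℕ →+* A := MvPolynomial.eval₂Hom (Nat.castRingHom A) id
  have hφ : Function.Surjective φ := fun a => ⟨MvPolynomial.X a, by simp [φ]⟩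
  let ψ : MvPolynomial A ℕ →+* MvPolynomial A ℤ := MvPolynomial.map (Nat.castRingHom ℤ)
  have hψ : Function.Injective ψ := MvPolynomial.map_injective _ Nat.cast_injective
  obtain ⟨f', hf'⟩ := exists_pull φ hφ f
  obtain ⟨u', rfl⟩ := mE_surj φ hφ u
  obtain ⟨g, hg⟩ := exists_push ψ f'
  constructor
  · rw [← mE_Q1 φ f' f hf']
    refine Sym.map φ _ (Sym.of_map ψ hψ _ ?_)
    rw [mE_Q1 ψ f' g hg]
    exact ring_Q1 _ _ _ hk _
  · rw [← mE_Q2 φ f' f hf']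
    refine Sym.map φ _ (Sym.of_map ψ hψ _ ?_)
    rw [mE_Q2 ψ f' g hg]
    exact ring_Q2 _ _ _ hk _

end Final

/-- `D_f(z)` and `D̄_f(z)` are quasi-inverse: for every
`u ∈ ⋀`, both `D̄_f(z)(D_f(z)u)` and `D_f(z)(D̄_f(z)u)` have constant coefficient
equal to `u`, and for every `k ≥ 1` their coefficient of `z^k` (the convolution
`Σ_{j=0}^{k}` of the coefficient operators) is a quasi-zero; i.e.
`D̄_f(z)(D_f(z)u) ⪰ u` and `D_f(z)(D̄_f(z)u) ⪰ u`. -/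
theorem Df_Dbar_quasi_inverse (f : Module.End A (ℕ →₀ A)) (u : Ext A) :
    (Dbar A f 0 (Df A f 0 u) = u) ∧
    (Df A f 0 (Dbar A f 0 u) = u) ∧
    (∀ k : ℕ, 1 ≤ k →
      IsQuasiZero A (∑ j ∈ Finset.range (k + 1), Dbar A f j (Df A f (k - j) u))) ∧
    (∀ k : ℕ, 1 ≤ k →
      IsQuasiZero A (∑ j ∈ Finset.range (k + 1), Df A f j (Dbar A f (k - j) u))) := by
  refine ⟨?_, ?_, fun k hk => ?_, fun k hk => ?_⟩
  · rw [Df_eq, Dbar_eq, HS_zero A eD (gD A f) rfl (pow_zero f), HS_zero A eB _ rfl rfl]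
  · rw [Df_eq, Dbar_eq, HS_zero A eB _ rfl rfl, HS_zero A eD (gD A f) rfl (pow_zero f)]
  · simp only [Df_eq, Dbar_eq]
    exact Sym.isQuasiZero A _ (transfer f u k hk).1
  · simp only [Df_eq, Dbar_eq]
    exact Sym.isQuasiZero A _ (transfer f u k hk).2

end ExtSemi
end
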